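/- Minimax lower bound with Gaussian reward models (instantiation of Theorem 3): Let ν be a probability measure on a measurable space X, let σ > 0, let n ≥ 1 be an integer, and let m₁, m₂ : X → ℝ be ν-integrable measurable functions with ∫ (m₁ − m₂)² dν ≤ 2σ²/n. Let Pᵢ = ν ⊗ κᵢ be the joint distribution on X × ℝ where κᵢ is the Markov kernel sending x to N(mᵢ(x), σ²). Then for every measurable estimator v̂ : (X × ℝ)ⁿ → ℝ computed from n i.i.d. samples, max over i ∈ {1,2} of ∫ (v̂ − ∫ mᵢ dν)² dPᵢ^{⊗n} ≥ (∫ (m₁ − m₂) dν)² / (16e). -/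

import Mathlib

open MeasureTheory ProbabilityTheory
open scoped ENNReal

lemma aux_pi_withDensity {ι α : Type*} [Fintype ι] [MeasurableSpace α] (P Q : Measure α)
    [IsProbabilityMeasure P] [IsProbabilityMeasure Q] (f : α → ℝ≥0∞) (hf : Measurable f)
    (h : Q = P.withDensity f) :
    Measure.pi (fun _ : ι => Q) = (Measure.pi fun _ : ι => P).withDensity
      (fun y => ∏ i, f (y i)) := by
  symm
  symm
  refine Measure.pi_eq fun s hs => ?_
  rw [withDensity_apply _ (MeasurableSet.univ_pi hs),
    ← lintegral_indicator (MeasurableSet.univ_pi hs)]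
  have h1 : ∀ y : ι → α, (Set.univ.pi s).indicator (fun y => ∏ i, f (y i)) y
      = ∏ i, (s i).indicator f (y i) := by
    intro y
    by_cases hy : y ∈ Set.univ.pi s
    · rw [Set.indicator_of_mem hy]
      refine Finset.prod_congr rfl fun i _ => ?_
      rw [Set.indicator_of_mem (hy i trivial)]
    · rw [Set.indicator_of_notMem hy]
      simp only [Set.mem_pi, not_forall] at hy
      obtain ⟨i, _, hi⟩ := hy
      symm
      exact Finset.prod_eq_zero (Finset.mem_univ i) (Set.indicator_of_notMem hi _)
  simp_rw [h1]
  have hm : ∀ i, Measurable ((s i).indicator f) := fun i => hf.indicator (hs i)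
  rw [lintegral_prod_eq_prod_lintegral_of_indepFun Finset.univ
    (fun i (y : ι → α) => (s i).indicator f (y i))
    (iIndepFun_pi (fun i => (hm i).aemeasurable)) (fun i => (hm i).comp (measurable_pi_apply i))]
  refine Finset.prod_congr rfl fun i _ => ?_
  rw [(measurePreserving_eval (fun _ : ι => P) i).lintegral_comp (hm i),
    lintegral_indicator (hs i), h, withDensity_apply _ (hs i)]

lemma aux_gauss (a b v : ℝ) (hv : 0 < v) :
    gaussianReal b v.toNNReal = (gaussianReal a v.toNNReal).withDensity
      (fun r => ENNReal.ofReal (Real.exp (((r - a) * (b - a)) / v - (a - b) ^ 2 / (2 * v)))) := by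
  have hv' : v.toNNReal ≠ 0 := by simpa using hv
  rw [gaussianReal_of_var_ne_zero _ hv', gaussianReal_of_var_ne_zero _ hv',
    ← withDensity_mul _ (measurable_gaussianPDF _ _) (by fun_prop)]
  congr 1
  ext r
  simp only [gaussianPDF, Pi.mul_apply]
  rw [← ENNReal.ofReal_mul (gaussianPDFReal_nonneg _ _ _)]
  congr 1
  simp only [gaussianPDFReal, Real.coe_toNNReal _ hv.le]
  rw [mul_assoc (√_)⁻¹, ← Real.exp_add]
  congr 2
  field_simp
  ring

lemma aux_pointwise (a b L : ℝ) :
    (b - a) ^ 2 / (2 * Real.exp 1) * (2 + L - (Real.exp L - 1) / 2)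
      ≤ a ^ 2 + b ^ 2 * Real.exp L := by
  have hw := Real.exp_pos L
  set w := Real.exp L with hwd
  have h1 : (b - a) ^ 2 * (w / (1 + w)) ≤ a ^ 2 + b ^ 2 * w := by
    rw [← mul_div_assoc, div_le_iff₀ (by positivity)]
    nlinarith [sq_nonneg (a + b * w)]
  have h2 : 1 / (2 * Real.exp 1) * (2 + L - (w - 1) / 2) ≤ w / (1 + w) := by
    have e1 : w / (1 + w) = 1 / (2 * Real.exp 1) *
        Real.exp (1 + L - Real.log ((1 + w) / 2)) := by
      rw [Real.exp_sub, Real.exp_add, Real.exp_log (by positivity), ← hwd]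
      field_simp
    rw [e1]
    have e2 := Real.add_one_le_exp (1 + L - Real.log ((1 + w) / 2))
    have e3 := Real.log_le_sub_one_of_pos (show 0 < (1 + w) / 2 by positivity)
    refine mul_le_mul_of_nonneg_left ?_ (by positivity)
    linarith
  calc _ = (b - a) ^ 2 * (1 / (2 * Real.exp 1) * (2 + L - (w - 1) / 2)) := by ring
    _ ≤ (b - a) ^ 2 * (w / (1 + w)) := mul_le_mul_of_nonneg_left h2 (sq_nonneg _)
    _ ≤ _ := h1

lemma aux_llr {X : Type*} [MeasurableSpace X] (ν : Measure X) [IsProbabilityMeasure ν]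
    (v : ℝ) (hv : 0 < v) (c : ℝ) (hc : 0 ≤ c)
    (m₁ m₂ : X → ℝ) (hm₁ : Measurable m₁) (hm₂ : Measurable m₂)
    (h_close : ∫⁻ x, ENNReal.ofReal ((m₁ x - m₂ x) ^ 2) ∂ν ≤ ENNReal.ofReal (2 * v * c))
    (κ₁ : Kernel X ℝ) [IsMarkovKernel κ₁]
    (hκ₁ : ∀ x, κ₁ x = gaussianReal (m₁ x) v.toNNReal) :
    Integrable (fun p : X × ℝ => ((p.2 - m₁ p.1) * (m₂ p.1 - m₁ p.1)) / v
        - (m₁ p.1 - m₂ p.1) ^ 2 / (2 * v)) (ν ⊗ₘ κ₁) ∧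
      - c ≤ ∫ p, (((p.2 - m₁ p.1) * (m₂ p.1 - m₁ p.1)) / v
        - (m₁ p.1 - m₂ p.1) ^ 2 / (2 * v)) ∂(ν ⊗ₘ κ₁) := by
  have hsq : Integrable (fun x => (m₁ x - m₂ x) ^ 2) ν := by
    refine ⟨by fun_prop, ?_⟩
    rw [hasFiniteIntegral_iff_ofReal (ae_of_all _ fun x => sq_nonneg _)]
    exact h_close.trans_lt ENNReal.ofReal_lt_top
  have hsq_le : ∫ x, (m₁ x - m₂ x) ^ 2 ∂ν ≤ 2 * v * c := by
    rw [integral_eq_lintegral_of_nonneg_ae (ae_of_all _ fun x => sq_nonneg _) (by fun_prop)]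
    exact ENNReal.toReal_le_of_le_ofReal (by positivity) h_close
  have hsq' : Integrable (fun p : X × ℝ => (m₁ p.1 - m₂ p.1) ^ 2) (ν ⊗ₘ κ₁) := by
    refine ⟨by fun_prop, ?_⟩
    rw [hasFiniteIntegral_iff_ofReal (ae_of_all _ fun x => sq_nonneg _),
      Measure.lintegral_compProd (by fun_prop)]
    simpa using h_close.trans_lt ENNReal.ofReal_lt_top
  have hr : Integrable (fun p : X × ℝ => (p.2 - m₁ p.1) ^ 2) (ν ⊗ₘ κ₁) := by
    refine ⟨by fun_prop, ?_⟩
    rw [hasFiniteIntegral_iff_ofReal (ae_of_all _ fun x => sq_nonneg _),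
      Measure.lintegral_compProd (by fun_prop)]
    have : ∀ x, ∫⁻ r, ENNReal.ofReal ((r - m₁ x) ^ 2) ∂(κ₁ x) = ENNReal.ofReal v := by
      intro x
      rw [hκ₁]
      have h1 := evariance_eq_lintegral_ofReal (fun r => r) (gaussianReal (m₁ x) v.toNNReal)
      rw [integral_id_gaussianReal] at h1
      rw [← h1, ← ofReal_variance (X := fun r => r) (memLp_id_gaussianReal' 2 (by simp)),
        variance_fun_id_gaussianReal, Real.coe_toNNReal _ hv.le]
    simp [this]
  have hcross : Integrable (fun p : X × ℝ => (p.2 - m₁ p.1) * (m₂ p.1 - m₁ p.1)) (ν ⊗ₘ κ₁) := by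
    refine (hr.add hsq').mono (by fun_prop) (ae_of_all _ fun p => ?_)
    simp only [Pi.add_apply, Real.norm_eq_abs]
    rw [abs_of_nonneg (a := (_ + _ : ℝ)) (by positivity), abs_le]
    constructor <;>
    nlinarith [sq_nonneg ((p.2 - m₁ p.1) + (m₂ p.1 - m₁ p.1)),
      sq_nonneg ((p.2 - m₁ p.1) - (m₂ p.1 - m₁ p.1)), sq_nonneg (p.2 - m₁ p.1),
      sq_nonneg (m₂ p.1 - m₁ p.1)]
  refine ⟨(hcross.div_const _).sub (hsq'.div_const _), ?_⟩
  rw [integral_sub (hcross.div_const _) (hsq'.div_const _), integral_div, integral_div,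
    Measure.integral_compProd hcross, Measure.integral_compProd hsq']
  have hz : ∀ x, ∫ r, (r - m₁ x) * (m₂ x - m₁ x) ∂(κ₁ x) = 0 := by
    intro x
    rw [hκ₁, integral_mul_const, integral_sub _ (integrable_const _), integral_id_gaussianReal]
    · simp
    · exact (memLp_id_gaussianReal' 1 (by simp)).integrable le_rfl
  simp only [hz]
  simp only [integral_const, probReal_univ, smul_eq_mul, one_mul, mul_zero, zero_div, zero_sub]
  rw [neg_le_neg_iff, div_le_iff₀ (by positivity)]
  linarith

/-- Minimax lower bound with Gaussian reward models (instantiation of Theorem 3):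
if the two hypotheses `Pᵢ = ν ⊗ₘ κᵢ` share the covariate marginal `ν` and have Gaussian
conditional reward distributions `N(mᵢ(x), σ²)` whose means satisfy
`∫ (m₁ − m₂)² dν ≤ 2σ²/n`, then no estimator `v̂` computed from `n` i.i.d. samples can
have squared-error risk smaller than `(∫ (m₁ − m₂) dν)²/(16e)` simultaneously under both
hypotheses, the target value of hypothesis `i` being the mean reward `∫ mᵢ dν`. -/
theorem gaussian_minimax_lower_bound
    {X : Type*} [MeasurableSpace X] (ν : Measure X) [IsProbabilityMeasure ν]
    (σ : ℝ) (hσ : 0 < σ) (n : ℕ) (hn : 1 ≤ n)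
    (m₁ m₂ : X → ℝ) (hm₁ : Measurable m₁) (hm₂ : Measurable m₂)
    (hm₁_int : Integrable m₁ ν) (hm₂_int : Integrable m₂ ν)
    (h_close : ∫⁻ x, ENNReal.ofReal ((m₁ x - m₂ x) ^ 2) ∂ν
      ≤ ENNReal.ofReal (2 * σ ^ 2 / n))
    (κ₁ κ₂ : Kernel X ℝ) [IsMarkovKernel κ₁] [IsMarkovKernel κ₂]
    (hκ₁ : ∀ x, κ₁ x = gaussianReal (m₁ x) (σ ^ 2).toNNReal)
    (hκ₂ : ∀ x, κ₂ x = gaussianReal (m₂ x) (σ ^ 2).toNNReal)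
    (vhat : (Fin n → X × ℝ) → ℝ) (hvhat : Measurable vhat) :
    ENNReal.ofReal ((∫ x, (m₁ x - m₂ x) ∂ν) ^ 2 / (16 * Real.exp 1))
      ≤ max
        (∫⁻ y, ENNReal.ofReal ((vhat y - ∫ x, m₁ x ∂ν) ^ 2)
          ∂(Measure.pi fun _ : Fin n => ν ⊗ₘ κ₁))
        (∫⁻ y, ENNReal.ofReal ((vhat y - ∫ x, m₂ x ∂ν) ^ 2)
          ∂(Measure.pi fun _ : Fin n => ν ⊗ₘ κ₂)) := by
  have hv : 0 < σ ^ 2 := by positivity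
  have hn' : (0 : ℝ) < n := by exact_mod_cast hn
  obtain ⟨hℓi, hℓ⟩ := aux_llr ν (σ ^ 2) hv (1 / n) (by positivity) m₁ m₂ hm₁ hm₂
    (by rwa [mul_one_div]) κ₁ hκ₁
  set ℓ : X × ℝ → ℝ := fun p => ((p.2 - m₁ p.1) * (m₂ p.1 - m₁ p.1)) / σ ^ 2
        - (m₁ p.1 - m₂ p.1) ^ 2 / (2 * σ ^ 2) with hℓd
  have hℓm : Measurable ℓ := by fun_prop
  have hQ : ν ⊗ₘ κ₂ = (ν ⊗ₘ κ₁).withDensity (fun p => ENNReal.ofReal (Real.exp (ℓ p))) := by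
    ext s hs
    rw [withDensity_apply _ hs, ← lintegral_indicator hs, ← lintegral_indicator_one hs,
      Measure.lintegral_compProd (measurable_one.indicator hs),
      Measure.lintegral_compProd ((by fun_prop : Measurable fun p =>
        ENNReal.ofReal (Real.exp (ℓ p))).indicator hs)]
    refine lintegral_congr fun x => ?_
    rw [hκ₂, hκ₁, aux_gauss (m₁ x) (m₂ x) _ hv]
    have hs' : Measurable fun b : ℝ => s.indicator (1 : X × ℝ → ℝ≥0∞) (x, b) :=
      (measurable_one.indicator hs).comp measurable_prodMk_left
    rw [lintegral_withDensity_eq_lintegral_mul _ (by fun_prop) hs']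
    refine lintegral_congr fun r => ?_
    by_cases hr : (x, r) ∈ s <;> simp [hr, hℓd]
  have hpi := aux_pi_withDensity (ι := Fin n) (ν ⊗ₘ κ₁) (ν ⊗ₘ κ₂) _ (by fun_prop) hQ
  set P := Measure.pi (fun _ : Fin n => ν ⊗ₘ κ₁) with hP
  set L : (Fin n → X × ℝ) → ℝ := fun y => ∑ i, ℓ (y i) with hL
  have hLm : Measurable L := by fun_prop
  have hw : (fun y : Fin n → X × ℝ => ∏ i, ENNReal.ofReal (Real.exp (ℓ (y i))))
      = fun y => ENNReal.ofReal (Real.exp (L y)) := by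
    ext y
    rw [hL, Real.exp_sum, ENNReal.ofReal_prod_of_nonneg fun i _ => (Real.exp_pos _).le]
  rw [hw] at hpi
  have hLi : Integrable L P := integrable_finsetSum _ fun i _ => integrable_comp_eval hℓi
  have hLint : -1 ≤ ∫ y, L y ∂P := by
    rw [hL, integral_finsetSum _ fun i _ => integrable_comp_eval hℓi]
    have : ∀ i : Fin n, ∫ y, ℓ (y i) ∂P = ∫ p, ℓ p ∂(ν ⊗ₘ κ₁) := fun i =>
      integral_comp_eval (μ := fun _ : Fin n => ν ⊗ₘ κ₁) hℓm.aestronglyMeasurable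
    rw [Finset.sum_congr rfl fun i _ => this i]
    simp only [ Finset.sum_const, Finset.card_univ, Fintype.card_fin, nsmul_eq_mul]
    have h3 := mul_le_mul_of_nonneg_left hℓ hn'.le
    have h4 : (n : ℝ) * -(1 / n) = -1 := by field_simp
    linarith
  have hwl : ∫⁻ y, ENNReal.ofReal (Real.exp (L y)) ∂P = 1 := by
    have h5 : (Measure.pi fun _ : Fin n => ν ⊗ₘ κ₂) Set.univ = 1 := measure_univ
    rwa [hpi, withDensity_apply _ MeasurableSet.univ, Measure.restrict_univ] at h5
  have hwi : Integrable (fun y => Real.exp (L y)) P := by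
    refine ⟨by fun_prop, ?_⟩
    rw [hasFiniteIntegral_iff_ofReal (ae_of_all _ fun x => (Real.exp_pos _).le), hwl]
    exact ENNReal.one_lt_top
  have hwint : ∫ y, Real.exp (L y) ∂P = 1 := by
    rw [integral_eq_lintegral_of_nonneg_ae (ae_of_all _ fun x => (Real.exp_pos _).le)
      (by fun_prop), hwl, ENNReal.toReal_one]
  rw [integral_sub hm₁_int hm₂_int]
  set θ₁ := ∫ x, m₁ x ∂ν
  set θ₂ := ∫ x, m₂ x ∂ν
  rw [hpi, lintegral_withDensity_eq_lintegral_mul _ (by fun_prop) (by fun_prop)]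
  set R₁ := ∫⁻ y, ENNReal.ofReal ((vhat y - θ₁) ^ 2) ∂P with hR₁
  set R₂ := ∫⁻ y, ((fun y => ENNReal.ofReal (Real.exp (L y))) *
    fun y => ENNReal.ofReal ((vhat y - θ₂) ^ 2)) y ∂P with hR₂
  have hsum : ENNReal.ofReal ((θ₁ - θ₂) ^ 2 / (2 * Real.exp 1)) ≤ R₁ + R₂ := by
    set g : (Fin n → X × ℝ) → ℝ := fun y => (θ₁ - θ₂) ^ 2 / (2 * Real.exp 1) *
      (2 + L y - (Real.exp (L y) - 1) / 2) with hg
    have hi1 : Integrable (fun y => 2 + L y) P := (integrable_const _).add hLi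
    have hi2 : Integrable (fun y => (Real.exp (L y) - 1) / 2) P :=
      (hwi.sub (integrable_const _)).div_const _
    have hgint : (θ₁ - θ₂) ^ 2 / (2 * Real.exp 1) ≤ ∫ y, g y ∂P := by
      rw [hg, integral_const_mul, integral_sub hi1 hi2, integral_add (integrable_const _) hLi,
        integral_div, integral_sub hwi (integrable_const _), hwint]
      simp only [integral_const, probReal_univ, smul_eq_mul, one_mul, sub_self, zero_div, sub_zero]
      exact le_mul_of_one_le_right (by positivity) (by linarith)
    have hgi : Integrable g P := (hi1.sub hi2).const_mul _
    calc _ ≤ ENNReal.ofReal (∫ y, g y ∂P) := ENNReal.ofReal_le_ofReal hgint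
      _ ≤ ∫⁻ y, ENNReal.ofReal (g y) ∂P := by
        rw [integral_eq_lintegral_pos_part_sub_lintegral_neg_part hgi]
        refine (ENNReal.ofReal_le_ofReal (sub_le_self _ ENNReal.toReal_nonneg)).trans ?_
        exact ENNReal.ofReal_toReal_le
      _ ≤ ∫⁻ y, (ENNReal.ofReal ((vhat y - θ₁) ^ 2) + ((fun y => ENNReal.ofReal (Real.exp (L y))) *
          fun y => ENNReal.ofReal ((vhat y - θ₂) ^ 2)) y) ∂P := by
        refine lintegral_mono fun y => ?_
        simp only [Pi.mul_apply]
        rw [← ENNReal.ofReal_mul (Real.exp_pos _).le,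
          ← ENNReal.ofReal_add (by positivity) (by positivity)]
        refine ENNReal.ofReal_le_ofReal ?_
        have := aux_pointwise (vhat y - θ₁) (vhat y - θ₂) (L y)
        rw [show vhat y - θ₂ - (vhat y - θ₁) = θ₁ - θ₂ by ring] at this
        rw [mul_comm (Real.exp (L y))]
        exact this
      _ = R₁ + R₂ := lintegral_add_left (by fun_prop) _
  by_contra hlt
  rw [not_le, max_lt_iff] at hlt
  have h6 := hsum.trans_lt (ENNReal.add_lt_add hlt.1 hlt.2)
  rw [← ENNReal.ofReal_add (by positivity) (by positivity)] at h6
  refine absurd h6 (not_lt.mpr (ENNReal.ofReal_le_ofReal ?_))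
  have h7 : 0 ≤ (θ₁ - θ₂) ^ 2 / Real.exp 1 := by positivity
  have h8 : (θ₁ - θ₂) ^ 2 / (16 * Real.exp 1) = (θ₁ - θ₂) ^ 2 / Real.exp 1 / 16 := by
    field_simp
  have h9 : (θ₁ - θ₂) ^ 2 / (2 * Real.exp 1) = (θ₁ - θ₂) ^ 2 / Real.exp 1 / 2 := by
    field_simp
  rw [h8, h9]
  linarith
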